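/- Let E be a real Banach space, let 𝒵 ⊆ ℭ(E) be nonempty and compact in the Pompeiu–Hausdorff metric h, let {X_n} be a sequence with X_n ∈ 𝒵 for all n, and let C ∈ ℭ_c(E) be compact and convex. If the closures of (co̅X₁ + … + co̅X_n)/n Fisher-converge to C as n → ∞, where co̅X denotes the closed convex hull of X, then the closures of (X₁ + … + X_n)/n converge to C in the Pompeiu–Hausdorff metric as n → ∞. -/

import Mathlib

open Metric Filter Topology Pointwise

variable {E : Type*} [NormedAddCommGroup E] [NormedSpace ℝ E] [CompleteSpace E]

/-- The excess `e(A,B) = sup_{a ∈ A} d(a, B)`. -/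
noncomputable def excess (A B : Set E) : ℝ := sSup ((fun a => infDist a B) '' A)

/-- The Pompeiu–Hausdorff distance `h(A,B) = max (e(A,B)) (e(B,A))`. -/
noncomputable def hdist (A B : Set E) : ℝ := max (excess A B) (excess B A)

/-- Fisher convergence: `e(Xₙ, L) → 0` and `d(z, Xₙ) → 0` for every `z ∈ L`. -/
def FisherConv (X : ℕ → Set E) (L : Set E) : Prop :=
  Tendsto (fun n => excess (X n) L) atTop (𝓝 0) ∧
    ∀ z ∈ L, Tendsto (fun n => infDist z (X n)) atTop (𝓝 0)

/-- A family of sets is compact in the Pompeiu–Hausdorff metric iff it is sequentially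
compact: every sequence in the family has a subsequence converging in `h` to a member. -/
def HCompact (𝒵 : Set (Set E)) : Prop :=
  ∀ Z : ℕ → Set E, (∀ n, Z n ∈ 𝒵) →
    ∃ W ∈ 𝒵, ∃ φ : ℕ → ℕ, StrictMono φ ∧
      Tendsto (fun k => hdist (Z (φ k)) W) atTop (𝓝 0)

/-!
A point `c` of the convex hull of `A` has bounded discrepancy: `m • c` stays within a constant,
depending on `c` but not on `m`, of a sum of `m` copies of `A`. Hence, for a sequence `X` taking
finitely many values `A k`, and for chosen points `c k` of their convex hulls, the mean of the `X i`
is asymptotically close to the average of the `c k` weighted by the frequencies of the `A k`. The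
frequencies stay in a compact cube, so they converge along every ultrafilter; there the distances of
a point to the mean of the `X i` and to the mean of their convex hulls have the same limit. A finite
Hausdorff net of `𝒵` transfers this to arbitrary sequences in `𝒵`, and total boundedness of `C`
turns Fisher convergence to `C` into Hausdorff convergence.
-/

section MinkowskiSum

variable {V : Type*}

lemma nonempty_finsetSum [AddCommMonoid V] {ι : Type*} (s : Finset ι) {A : ι → Set V}
    (hA : ∀ i ∈ s, (A i).Nonempty) : (∑ i ∈ s, A i).Nonempty :=
  Finset.sum_induction A Set.Nonempty (fun _ _ => Set.Nonempty.add) Set.zero_nonempty hA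

variable [AddCommGroup V] [Module ℝ V]

lemma sum_const_eq_card_smul_of_convex {ι : Type*} {A : Set V} (hA : Convex ℝ A)
    (hne : A.Nonempty) (s : Finset ι) : ∑ _i ∈ s, A = (s.card : ℝ) • A := by
  classical
  induction s using Finset.induction_on with
  | empty => simp [Set.zero_smul_set hne]
  | insert i s hi ih =>
    rw [Finset.sum_insert hi, ih, Finset.card_insert_of_notMem hi, Nat.cast_succ, add_comm,
      hA.add_smul (Nat.cast_nonneg _) zero_le_one, one_smul]

/-- The Minkowski mean `(X₀ + ⋯ + Xₙ) / (n + 1)`; the index is shifted by one against the usual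
`(X₁ + ⋯ + Xₙ) / n` so that it makes sense for every `n`. -/
noncomputable def minkowskiMean (X : ℕ → Set V) (n : ℕ) : Set V :=
  ((n : ℝ) + 1)⁻¹ • ∑ i ∈ Finset.range (n + 1), X i

lemma minkowskiMean_mono {X Y : ℕ → Set V} (h : ∀ i, X i ⊆ Y i) (n : ℕ) :
    minkowskiMean X n ⊆ minkowskiMean Y n :=
  Set.smul_set_mono (Set.finsetSum_subset_finsetSum _ _ _ fun i _ => h i)

lemma nonempty_minkowskiMean {X : ℕ → Set V} (h : ∀ i, (X i).Nonempty) (n : ℕ) :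
    (minkowskiMean X n).Nonempty :=
  (nonempty_finsetSum _ fun i _ => h i).smul_set

end MinkowskiSum

section Distance

lemma infDist_le_infDist_add_of_forall_mem {α : Type*} [PseudoMetricSpace α] {A B : Set α} {δ : ℝ}
    (hA : A.Nonempty) (h : ∀ a ∈ A, infDist a B ≤ δ) (z : α) :
    infDist z B ≤ infDist z A + δ := by
  rw [← sub_le_iff_le_add, le_infDist hA]
  intro a ha
  linarith [h a ha, infDist_le_infDist_add_dist (x := z) (y := a) (s := B)]

lemma infDist_le_of_hausdorffEDist_le {α : Type*} [PseudoMetricSpace α] {A B : Set α} {δ : ℝ}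
    (hδ : 0 ≤ δ) (h : hausdorffEDist A B ≤ ENNReal.ofReal δ) {a : α} (ha : a ∈ A) :
    infDist a B ≤ δ :=
  ENNReal.toReal_le_of_le_ofReal hδ ((infEDist_le_hausdorffEDist_of_mem ha).trans h)

variable {F : Type*} [SeminormedAddCommGroup F]

lemma infDist_add_le (x y : F) (A B : Set F) :
    infDist (x + y) (A + B) ≤ infDist x A + infDist y B := by
  rcases A.eq_empty_or_nonempty with rfl | hA
  · simp [infDist_nonneg]
  rcases B.eq_empty_or_nonempty with rfl | hB
  · simp [infDist_nonneg]
  rw [← sub_le_iff_le_add, le_infDist hA]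
  intro a ha
  rw [sub_le_comm, le_infDist hB]
  intro b hb
  rw [sub_le_iff_le_add']
  exact (infDist_le_dist_of_mem (Set.add_mem_add ha hb)).trans (dist_add_add_le x y a b)

lemma infDist_sum_le {ι : Type*} (s : Finset ι) (x : ι → F) (A : ι → Set F) :
    infDist (∑ i ∈ s, x i) (∑ i ∈ s, A i) ≤ ∑ i ∈ s, infDist (x i) (A i) := by
  classical
  induction s using Finset.induction_on with
  | empty => simp [infDist_zero_of_mem]
  | insert i s hi ih =>
    simp only [Finset.sum_insert hi]
    exact (infDist_add_le _ _ _ _).trans (by gcongr)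

lemma isBounded_finsetSum {ι : Type*} (s : Finset ι) {A : ι → Set F}
    (hA : ∀ i ∈ s, Bornology.IsBounded (A i)) : Bornology.IsBounded (∑ i ∈ s, A i) :=
  Finset.sum_induction A Bornology.IsBounded (fun _ _ => Bornology.IsBounded.add)
    Bornology.isBounded_singleton hA

end Distance

section Convexity

variable {F : Type*} [SeminormedAddCommGroup F] [NormedSpace ℝ F]

lemma infDist_convexHull_le_of_mem_closure_convexHull {A B : Set F} {δ : ℝ} (hδ : 0 ≤ δ)
    (hB : B.Nonempty) (h : ∀ a ∈ A, infDist a B ≤ δ) {x : F}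
    (hx : x ∈ closure (convexHull ℝ A)) : infDist x (convexHull ℝ B) ≤ δ := by
  have hcthick (y : F) : y ∈ cthickening δ (convexHull ℝ B) ↔ infDist y (convexHull ℝ B) ≤ δ :=
    ENNReal.le_ofReal_iff_toReal_le (infEDist_ne_top hB.convexHull) hδ
  rw [← hcthick]
  refine closure_minimal (convexHull_min (fun a ha => ?_) ?_) isClosed_cthickening hx
  · exact (hcthick a).2 ((infDist_le_infDist_of_subset (subset_convexHull ℝ B) hB).trans (h a ha))
  · exact (convex_convexHull ℝ B).cthickening δ

lemma infDist_card_smul_combo_le {ι : Type*} {A : Set F} {x y : F} {K L : ℝ}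
    (hx : ∀ s : Finset ι, infDist ((s.card : ℝ) • x) (∑ _i ∈ s, A) ≤ K)
    (hy : ∀ s : Finset ι, infDist ((s.card : ℝ) • y) (∑ _i ∈ s, A) ≤ L)
    {α β : ℝ} (hα : 0 ≤ α) (hβ : 0 ≤ β) (hαβ : α + β = 1) (s : Finset ι) :
    infDist ((s.card : ℝ) • (α • x + β • y)) (∑ _i ∈ s, A) ≤ K + L + ‖x - y‖ := by
  classical
  -- Use `x` for about `α * s.card` of the summands and `y` for the remaining ones.
  have hfloor : ⌊α * s.card⌋₊ ≤ s.card :=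
    Nat.floor_le_of_le (mul_le_of_le_one_left (Nat.cast_nonneg _) (by linarith))
  obtain ⟨t, hts, ht⟩ := Finset.exists_subset_card_eq hfloor
  have hround : |α * s.card - t.card| ≤ 1 := by
    have hle := Nat.floor_le (a := α * s.card) (by positivity)
    have hlt := Nat.lt_floor_add_one (α * (s.card : ℝ))
    rw [ht, abs_le]
    constructor <;> linarith
  have hcard : (((s \ t).card : ℕ) : ℝ) = s.card - t.card := by
    rw [Finset.card_sdiff_of_subset hts, Nat.cast_sub (Finset.card_le_card hts)]
  have hsplit : (s.card : ℝ) • (α • x + β • y) -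
      (((s \ t).card : ℝ) • y + (t.card : ℝ) • x) = (α * s.card - t.card) • (x - y) := by
    rw [hcard, eq_sub_of_add_eq' hαβ]
    module
  calc infDist ((s.card : ℝ) • (α • x + β • y)) (∑ _i ∈ s, A)
      ≤ infDist (((s \ t).card : ℝ) • y + (t.card : ℝ) • x) (∑ _i ∈ s, A) +
          ‖(α * s.card - t.card) • (x - y)‖ := by
        rw [← hsplit, ← dist_eq_norm]
        exact infDist_le_infDist_add_dist
    _ ≤ (L + K) + ‖x - y‖ := by
        gcongr
        · rw [← Finset.sum_sdiff hts]
          exact (infDist_add_le _ _ _ _).trans (add_le_add (hy _) (hx _))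
        · rw [norm_smul, Real.norm_eq_abs]
          exact mul_le_of_le_one_left (norm_nonneg _) hround
    _ = K + L + ‖x - y‖ := by ring

lemma exists_forall_infDist_card_smul_le_of_mem_convexHull {A : Set F} {c : F}
    (hc : c ∈ convexHull ℝ A) (ι : Type*) :
    ∃ K : ℝ, ∀ s : Finset ι, infDist ((s.card : ℝ) • c) (∑ _i ∈ s, A) ≤ K := by
  have hsubset : A ⊆ {c | ∃ K : ℝ, ∀ s : Finset ι,
      infDist ((s.card : ℝ) • c) (∑ _i ∈ s, A) ≤ K} := fun a ha => by
    refine ⟨0, fun s => ?_⟩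
    have := infDist_sum_le s (fun _ => a) (fun _ => A)
    simpa [infDist_zero_of_mem ha, Nat.cast_smul_eq_nsmul] using this
  refine convexHull_min hsubset ?_ hc
  rintro x ⟨K, hK⟩ y ⟨L, hL⟩ α β hα hβ hαβ
  exact ⟨K + L + ‖x - y‖, infDist_card_smul_combo_le hK hL hα hβ hαβ⟩

lemma continuous_infDist_sum_smul {κ : Type*} [Fintype κ] {A : κ → Set F}
    (hne : ∀ k, (A k).Nonempty) (hbd : ∀ k, Bornology.IsBounded (A k)) (z : F) :
    Continuous fun w : κ → ℝ => infDist z (∑ k, w k • A k) := by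
  obtain ⟨M, hM⟩ := (Bornology.isBounded_iUnion.2 hbd).exists_norm_le
  refine (LipschitzWith.of_le_add_mul' (Fintype.card κ * M) fun w v => ?_).continuous
  refine infDist_le_infDist_add_of_forall_mem
    (nonempty_finsetSum _ fun k _ => (hne k).smul_set) (fun a ha => ?_) z
  obtain ⟨b, hb, rfl⟩ := (Set.mem_finsetSum _ _ _).1 ha
  calc infDist (∑ k, b k) (∑ k, w k • A k)
      ≤ ∑ k, infDist (b k) (w k • A k) := infDist_sum_le _ _ _
    _ ≤ ∑ _k : κ, dist w v * M := by
        refine Finset.sum_le_sum fun k hk => ?_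
        obtain ⟨c, hc, hcb⟩ := Set.mem_smul_set.1 (hb hk)
        rw [← hcb]
        refine (infDist_le_dist_of_mem (Set.smul_mem_smul_set hc)).trans ?_
        rw [dist_eq_norm, ← sub_smul, norm_smul, ← dist_eq_norm, dist_comm]
        gcongr
        · exact dist_le_pi_dist w v k
        · exact hM c (Set.mem_iUnion_of_mem k hc)
    _ = Fintype.card κ * M * dist w v := by
        rw [Finset.sum_const, Finset.card_univ, nsmul_eq_mul]
        ring

end Convexity

section MeanDistance

variable {F : Type*} [SeminormedAddCommGroup F] [NormedSpace ℝ F]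

lemma isBounded_minkowskiMean {X : ℕ → Set F} (h : ∀ i, Bornology.IsBounded (X i)) (n : ℕ) :
    Bornology.IsBounded (minkowskiMean X n) :=
  (isBounded_finsetSum _ fun i _ => h i).smul₀ _

lemma infDist_minkowskiMean_le_of_mem {X Y : ℕ → Set F} {δ : ℝ}
    (h : ∀ i, ∀ x ∈ X i, infDist x (Y i) ≤ δ) (n : ℕ) {x : F} (hx : x ∈ minkowskiMean X n) :
    infDist x (minkowskiMean Y n) ≤ δ := by
  obtain ⟨_, hsum, rfl⟩ := Set.mem_smul_set.1 hx
  obtain ⟨y, hy, rfl⟩ := (Set.mem_finsetSum _ _ _).1 hsum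
  have hn : (0 : ℝ) < n + 1 := by positivity
  rw [minkowskiMean, infDist_smul₀ (inv_ne_zero hn.ne'), Real.norm_of_nonneg (by positivity),
    inv_mul_le_iff₀ hn]
  calc infDist (∑ i ∈ Finset.range (n + 1), y i) (∑ i ∈ Finset.range (n + 1), Y i)
      ≤ ∑ i ∈ Finset.range (n + 1), infDist (y i) (Y i) := infDist_sum_le _ _ _
    _ ≤ ∑ _i ∈ Finset.range (n + 1), δ := Finset.sum_le_sum fun i hi => h i _ (hy hi)
    _ = (n + 1) * δ := by simp

lemma infDist_minkowskiMean_le_add {X Y : ℕ → Set F} {δ : ℝ} (hX : ∀ i, (X i).Nonempty)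
    (h : ∀ i, ∀ x ∈ X i, infDist x (Y i) ≤ δ) (z : F) (n : ℕ) :
    infDist z (minkowskiMean Y n) ≤ infDist z (minkowskiMean X n) + δ :=
  infDist_le_infDist_add_of_forall_mem (nonempty_minkowskiMean hX n)
    (fun _ => infDist_minkowskiMean_le_of_mem h n) z

end MeanDistance

section FinitelyManySets

variable {κ : Type*} [DecidableEq κ]

/-- The frequency of the value `k` among the first `n + 1` terms of the sequence `j`. -/
noncomputable def frequency (j : ℕ → κ) (n : ℕ) (k : κ) : ℝ :=
  ((n : ℝ) + 1)⁻¹ * ({i ∈ Finset.range (n + 1) | j i = k}.card : ℝ)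

lemma frequency_mem_Icc (j : ℕ → κ) (n : ℕ) : frequency j n ∈ Set.Icc (0 : κ → ℝ) 1 := by
  refine ⟨fun k => ?_, fun k => ?_⟩
  · simp only [frequency, Pi.zero_apply]
    positivity
  · have hcard := Finset.card_filter_le (Finset.range (n + 1)) (fun i => j i = k)
    rw [Finset.card_range] at hcard
    rw [frequency, inv_mul_le_iff₀ (by positivity)]
    simpa using (mod_cast hcard : _ ≤ (n : ℝ) + 1)

variable [Fintype κ]

section

variable {V : Type*} [AddCommGroup V] [Module ℝ V]

lemma minkowskiMean_comp_eq_smul_sum_fiber (j : ℕ → κ) (A : κ → Set V) (n : ℕ) :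
    minkowskiMean (A ∘ j) n =
      ((n : ℝ) + 1)⁻¹ • ∑ k, ∑ i ∈ Finset.range (n + 1) with j i = k, A k := by
  rw [minkowskiMean, ← Finset.sum_fiberwise (Finset.range (n + 1)) j]
  refine congrArg _ (Finset.sum_congr rfl fun k _ => Finset.sum_congr rfl fun i hi => ?_)
  rw [Function.comp_apply, (Finset.mem_filter.1 hi).2]

lemma minkowskiMean_comp_of_convex (j : ℕ → κ) {A : κ → Set V} (hA : ∀ k, Convex ℝ (A k))
    (hne : ∀ k, (A k).Nonempty) (n : ℕ) :
    minkowskiMean (A ∘ j) n = ∑ k, frequency j n k • A k := by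
  rw [minkowskiMean_comp_eq_smul_sum_fiber, Finset.smul_sum]
  refine Finset.sum_congr rfl fun k _ => ?_
  rw [sum_const_eq_card_smul_of_convex (hA k) (hne k), smul_smul, frequency]

end

variable {F : Type*} [SeminormedAddCommGroup F] [NormedSpace ℝ F]

lemma tendsto_infDist_sum_frequency_smul_minkowskiMean (j : ℕ → κ) {A : κ → Set F} {c : κ → F}
    (hc : ∀ k, c k ∈ convexHull ℝ (A k)) :
    Tendsto (fun n => infDist (∑ k, frequency j n k • c k) (minkowskiMean (A ∘ j) n))
      atTop (𝓝 0) := by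
  choose K hK using fun k => exists_forall_infDist_card_smul_le_of_mem_convexHull (hc k) ℕ
  have hlim : Tendsto (fun n : ℕ => ((n : ℝ) + 1)⁻¹ * ∑ k, K k) atTop (𝓝 0) := by
    simpa using (tendsto_one_div_add_atTop_nhds_zero_nat (𝕜 := ℝ)).mul_const (∑ k, K k)
  refine squeeze_zero (fun _ => infDist_nonneg) (fun n => ?_) hlim
  have hn : (0 : ℝ) < n + 1 := by positivity
  simp only [frequency, mul_smul, ← Finset.smul_sum]
  rw [minkowskiMean_comp_eq_smul_sum_fiber, infDist_smul₀ (inv_ne_zero hn.ne'),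
    Real.norm_of_nonneg (by positivity)]
  gcongr
  exact (infDist_sum_le _ _ _).trans (Finset.sum_le_sum fun k _ => hK k _)

lemma eventually_infDist_minkowskiMean_comp_lt {j : ℕ → κ} {A : κ → Set F}
    (hne : ∀ k, (A k).Nonempty) {l : Filter ℕ} (hl : l ≤ atTop) {w : κ → ℝ}
    (hw : Tendsto (frequency j) l (𝓝 w)) {z : F} {r : ℝ}
    (hr : infDist z (∑ k, w k • convexHull ℝ (A k)) < r) :
    ∀ᶠ n in l, infDist z (minkowskiMean (A ∘ j) n) < r := by
  obtain ⟨y, hy, hyr⟩ := (infDist_lt_iff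
    (nonempty_finsetSum _ fun k _ => (hne k).convexHull.smul_set)).1 hr
  obtain ⟨b, hb, rfl⟩ := (Set.mem_finsetSum _ _ _).1 hy
  choose c hc hcb using fun k => Set.mem_smul_set.1 (hb (Finset.mem_univ k))
  simp only [← hcb] at hyr
  have hdist : Tendsto (fun n => dist z (∑ k, frequency j n k • c k)) l
      (𝓝 (dist z (∑ k, w k • c k))) :=
    tendsto_const_nhds.dist <| tendsto_finsetSum _ fun k _ =>
      ((tendsto_pi_nhds.1 hw) k).smul_const (c k)
  have hsum := ((tendsto_infDist_sum_frequency_smul_minkowskiMean j hc).mono_left hl).add hdist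
  rw [zero_add] at hsum
  filter_upwards [hsum.eventually_lt_const hyr] with n hn
  exact infDist_le_infDist_add_dist.trans_lt hn

end FinitelyManySets

section TotallyBounded

attribute [local instance] PseudoEMetricSpace.hausdorff

variable {F : Type*} [SeminormedAddCommGroup F] [NormedSpace ℝ F]

lemma tendsto_infDist_minkowskiMean_comp_sub {κ : Type*} [Finite κ] (j : ℕ → κ)
    {A : κ → Set F} (hne : ∀ k, (A k).Nonempty) (hbd : ∀ k, Bornology.IsBounded (A k)) (z : F) :
    Tendsto (fun n => infDist z (minkowskiMean (A ∘ j) n) -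
      infDist z (minkowskiMean (fun i => convexHull ℝ (A (j i))) n)) atTop (𝓝 0) := by
  classical
  cases nonempty_fintype κ
  rw [tendsto_iff_ultrafilter]
  intro 𝒰 h𝒰
  obtain ⟨w, -, hw⟩ := isCompact_iff_ultrafilter_le_nhds.1 isCompact_Icc (𝒰.map (frequency j))
    (tendsto_principal.2 (Eventually.of_forall (frequency_mem_Icc j)))
  have hconv : Tendsto (fun n => infDist z (minkowskiMean (fun i => convexHull ℝ (A (j i))) n)) 𝒰
      (𝓝 (infDist z (∑ k, w k • convexHull ℝ (A k)))) := by
    have hcont := continuous_infDist_sum_smul (fun k => (hne k).convexHull)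
      (fun k => isBounded_convexHull.2 (hbd k)) z
    refine ((hcont.tendsto w).comp hw).congr fun n => ?_
    exact congrArg (infDist z) (minkowskiMean_comp_of_convex j (fun k => convex_convexHull ℝ (A k))
      (fun k => (hne k).convexHull) n).symm
  have hmean : Tendsto (fun n => infDist z (minkowskiMean (A ∘ j) n)) 𝒰
      (𝓝 (infDist z (∑ k, w k • convexHull ℝ (A k)))) := by
    refine tendsto_order.2 ⟨fun r hr => ?_, fun r hr =>
      eventually_infDist_minkowskiMean_comp_lt hne h𝒰 hw hr⟩
    filter_upwards [hconv.eventually_const_lt hr] with n hn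
    exact hn.trans_le (infDist_le_infDist_of_subset
      (minkowskiMean_mono (fun i => subset_convexHull ℝ (A (j i))) n)
      (nonempty_minkowskiMean (fun i => hne (j i)) n))
  simpa using hmean.sub hconv

theorem tendsto_infDist_minkowskiMean_sub {𝒵 : Set (Set F)}
    (h𝒵 : ∀ A ∈ 𝒵, A.Nonempty ∧ Bornology.IsBounded A) (h𝒵tb : TotallyBounded 𝒵)
    {X : ℕ → Set F} (hX : ∀ n, X n ∈ 𝒵) (z : F) :
    Tendsto (fun n => infDist z (minkowskiMean X n) -
      infDist z (minkowskiMean (fun i => closure (convexHull ℝ (X i))) n)) atTop (𝓝 0) := by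
  have hXne (i : ℕ) : (X i).Nonempty := (h𝒵 _ (hX i)).1
  refine tendsto_order.2 ⟨fun r hr => Eventually.of_forall fun n => hr.trans_le ?_, fun ε hε => ?_⟩
  · have hsub := minkowskiMean_mono (fun i => (subset_convexHull ℝ (X i)).trans subset_closure) n
    exact sub_nonneg.2 (infDist_le_infDist_of_subset hsub (nonempty_minkowskiMean hXne n))
  have hδ : 0 < ε / 3 := by positivity
  obtain ⟨t, ht𝒵, htfin, hcover⟩ :=
    EMetric.totallyBounded_iff'.1 h𝒵tb (ENNReal.ofReal (ε / 3)) (ENNReal.ofReal_pos.2 hδ)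
  have : Finite t := htfin
  have hnear (i : ℕ) : ∃ A : t, hausdorffEDist (X i) A ≤ ENNReal.ofReal (ε / 3) := by
    obtain ⟨A, hA, hXA⟩ := Set.mem_iUnion₂.1 (hcover (hX i))
    exact ⟨⟨A, hA⟩, (mem_eball.1 hXA).le⟩
  choose j hj using hnear
  have hfinite := tendsto_infDist_minkowskiMean_comp_sub j (A := Subtype.val)
    (fun A => (h𝒵 A (ht𝒵 A.2)).1) (fun A => (h𝒵 A (ht𝒵 A.2)).2) z
  filter_upwards [hfinite.eventually_lt_const hδ] with n hn
  have hmean : infDist z (minkowskiMean X n) ≤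
      infDist z (minkowskiMean (Subtype.val ∘ j) n) + ε / 3 :=
    infDist_minkowskiMean_le_add (fun i => (h𝒵 _ (ht𝒵 (j i).2)).1) (fun i _ =>
      infDist_le_of_hausdorffEDist_le hδ.le (hausdorffEDist_comm.trans_le (hj i))) z n
  have hconv : infDist z (minkowskiMean (fun i => convexHull ℝ (j i : Set F)) n) ≤
      infDist z (minkowskiMean (fun i => closure (convexHull ℝ (X i))) n) + ε / 3 :=
    infDist_minkowskiMean_le_add (fun i => (hXne i).convexHull.closure) (fun i _ =>
      infDist_convexHull_le_of_mem_closure_convexHull hδ.le (h𝒵 _ (ht𝒵 (j i).2)).1 fun _ =>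
        infDist_le_of_hausdorffEDist_le hδ.le (hj i)) z n
  linarith

end TotallyBounded

section Excess

variable {F : Type*} [NormedAddCommGroup F]

lemma excess_nonneg (A B : Set F) : 0 ≤ excess A B :=
  Real.sSup_nonneg (Set.forall_mem_image.2 fun _ _ => infDist_nonneg)

lemma excess_le {A B : Set F} {r : ℝ} (hr : 0 ≤ r) (h : ∀ a ∈ A, infDist a B ≤ r) :
    excess A B ≤ r :=
  Real.sSup_le (Set.forall_mem_image.2 h) hr

lemma infDist_le_excess {A B : Set F} (hA : Bornology.IsBounded A) (hB : B.Nonempty) {a : F}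
    (ha : a ∈ A) : infDist a B ≤ excess A B := by
  obtain ⟨b, hb⟩ := hB
  obtain ⟨R, hR⟩ := hA.subset_closedBall b
  refine le_csSup ⟨R, Set.forall_mem_image.2 fun x hx => ?_⟩ (Set.mem_image_of_mem _ ha)
  exact (infDist_le_dist_of_mem hb).trans (hR hx)

lemma excess_le_excess_of_subset {A A' B : Set F} (h : A ⊆ A') (hA' : Bornology.IsBounded A')
    (hB : B.Nonempty) : excess A B ≤ excess A' B :=
  excess_le (excess_nonneg A' B) fun _ ha => infDist_le_excess hA' hB (h ha)

lemma hausdorffEDist_le_ofReal_hdist {A B : Set F} (hA : A.Nonempty)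
    (hAbd : Bornology.IsBounded A) (hB : B.Nonempty) (hBbd : Bornology.IsBounded B) :
    hausdorffEDist A B ≤ ENNReal.ofReal (hdist A B) := by
  refine hausdorffEDist_le_of_infEDist (fun a ha => ?_) (fun b hb => ?_)
  · refine (ENNReal.le_ofReal_iff_toReal_le (infEDist_ne_top hB) ?_).2 ?_
    · exact (excess_nonneg A B).trans (le_max_left _ _)
    · exact (infDist_le_excess hAbd hB ha).trans (le_max_left _ _)
  · refine (ENNReal.le_ofReal_iff_toReal_le (infEDist_ne_top hA) ?_).2 ?_
    · exact (excess_nonneg A B).trans (le_max_left _ _)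
    · exact (infDist_le_excess hBbd hA hb).trans (le_max_right _ _)

attribute [local instance] PseudoEMetricSpace.hausdorff in
lemma HCompact.totallyBounded {𝒵 : Set (Set F)} (h : HCompact 𝒵)
    (h𝒵 : ∀ A ∈ 𝒵, A.Nonempty ∧ Bornology.IsBounded A) : TotallyBounded 𝒵 := by
  refine IsSeqCompact.totallyBounded fun Z hZ => ?_
  obtain ⟨W, hW, φ, hφ, hlim⟩ := h Z hZ
  refine ⟨W, hW, φ, hφ, tendsto_iff_edist_tendsto_0.2 ?_⟩
  have hofReal := ENNReal.tendsto_ofReal hlim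
  rw [ENNReal.ofReal_zero] at hofReal
  refine tendsto_of_tendsto_of_tendsto_of_le_of_le tendsto_const_nhds hofReal (fun _ => bot_le)
    fun k => ?_
  exact hausdorffEDist_le_ofReal_hdist (h𝒵 _ (hZ _)).1 (h𝒵 _ (hZ _)).2 (h𝒵 W hW).1 (h𝒵 W hW).2

lemma tendsto_excess_of_totallyBounded {C : Set F} (hC : TotallyBounded C) {ι : Type*}
    {l : Filter ι} {A : ι → Set F} (h : ∀ z ∈ C, Tendsto (fun i => infDist z (A i)) l (𝓝 0)) :
    Tendsto (fun i => excess C (A i)) l (𝓝 0) := by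
  refine tendsto_order.2 ⟨fun r hr => Eventually.of_forall fun i =>
    hr.trans_le (excess_nonneg C (A i)), fun ε hε => ?_⟩
  have hδ : 0 < ε / 3 := by positivity
  obtain ⟨t, htC, htfin, hcover⟩ := finite_approx_of_totallyBounded hC (ε / 3) hδ
  have hnet : ∀ᶠ i in l, ∀ z ∈ t, infDist z (A i) < ε / 3 :=
    htfin.eventually_all.2 fun z hz => (h z (htC hz)).eventually_lt_const hδ
  filter_upwards [hnet] with i hi
  have hle : excess C (A i) ≤ ε / 3 + ε / 3 := by
    refine excess_le (by positivity) fun a ha => ?_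
    obtain ⟨z, hz, haz⟩ := Set.mem_iUnion₂.1 (hcover ha)
    exact infDist_le_infDist_add_dist.trans (add_le_add (hi z hz).le (mem_ball.1 haz).le)
  linarith

lemma FisherConv.tendsto_hdist {A : ℕ → Set F} {C : Set F} (h : FisherConv A C)
    (hC : TotallyBounded C) : Tendsto (fun n => hdist (A n) C) atTop (𝓝 0) := by
  simpa only [hdist, max_self] using h.1.max (tendsto_excess_of_totallyBounded hC h.2)

end Excess

section Convexification

attribute [local instance] PseudoEMetricSpace.hausdorff

variable {F : Type*} [NormedAddCommGroup F] [NormedSpace ℝ F]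

theorem fisherConv_closure_minkowskiMean_of_convexified {𝒵 : Set (Set F)}
    (h𝒵 : ∀ A ∈ 𝒵, A.Nonempty ∧ Bornology.IsBounded A) (h𝒵tb : TotallyBounded 𝒵)
    {X : ℕ → Set F} (hX : ∀ n, X n ∈ 𝒵) {C : Set F} (hC : C.Nonempty)
    (hco : FisherConv
      (fun n => closure (minkowskiMean (fun i => closure (convexHull ℝ (X i))) n)) C) :
    FisherConv (fun n => closure (minkowskiMean X n)) C := by
  refine ⟨squeeze_zero (fun _ => excess_nonneg _ _) (fun n => ?_) hco.1, fun z hz => ?_⟩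
  · refine excess_le_excess_of_subset (closure_mono (minkowskiMean_mono (fun i =>
      (subset_convexHull ℝ (X i)).trans subset_closure) n)) ?_ hC
    exact (isBounded_minkowskiMean (fun i =>
      (isBounded_convexHull.2 (h𝒵 _ (hX i)).2).closure) n).closure
  · have hconv := hco.2 z hz
    simp only [infDist_closure] at hconv ⊢
    simpa using (tendsto_infDist_minkowskiMean_sub h𝒵 h𝒵tb hX z).add hconv

theorem hConv_of_fisherConv_convexified_general (𝒵 : Set (Set F))
    (h𝒵 : ∀ A ∈ 𝒵, A.Nonempty ∧ Bornology.IsBounded A) (h𝒵tb : TotallyBounded 𝒵)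
    (X : ℕ → Set F) (hX : ∀ n, X n ∈ 𝒵) (C : Set F) (hCne : C.Nonempty) (hC : TotallyBounded C)
    (hco : FisherConv
      (fun n => closure (minkowskiMean (fun i => closure (convexHull ℝ (X i))) n)) C) :
    Tendsto (fun n => hdist (closure (minkowskiMean X n)) C) atTop (𝓝 0) :=
  (fisherConv_closure_minkowskiMean_of_convexified h𝒵 h𝒵tb hX hCne hco).tendsto_hdist hC

end Convexification

/-- Theorem 4.2: let `𝒵 ⊆ ℭ(E)` be nonempty and compact in the Pompeiu–Hausdorff
metric, `Xₙ ∈ 𝒵` for all `n`, and let `C ∈ ℭ_c(E)` be compact and convex. If the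
closures of `(co̅X₁ + ⋯ + co̅Xₙ)/n` Fisher-converge to `C`, then the closures of
`(X₁ + ⋯ + Xₙ)/n` converge to `C` in the Pompeiu–Hausdorff metric. -/
theorem hConv_of_fisherConv_convexified (𝒵 : Set (Set E)) (h𝒵ne : 𝒵.Nonempty)
    (h𝒵 : ∀ A ∈ 𝒵, A.Nonempty ∧ IsClosed A ∧ Bornology.IsBounded A)
    (h𝒵c : HCompact 𝒵)
    (X : ℕ → Set E) (hX : ∀ n, X n ∈ 𝒵)
    (C : Set E) (hCne : C.Nonempty) (hCcl : IsClosed C)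
    (hCbd : Bornology.IsBounded C) (hCcv : Convex ℝ C) (hCk : IsCompact C)
    (hco : FisherConv
      (fun n => closure ((((n : ℝ) + 1))⁻¹ •
        ∑ i ∈ Finset.range (n + 1), closure (convexHull ℝ (X i)))) C) :
    Tendsto
      (fun n : ℕ => hdist (closure ((((n : ℝ) + 1))⁻¹ • ∑ i ∈ Finset.range (n + 1), X i)) C)
      atTop (𝓝 0) := by
  have h𝒵' (A : Set E) (hA : A ∈ 𝒵) : A.Nonempty ∧ Bornology.IsBounded A :=
    ⟨(h𝒵 A hA).1, (h𝒵 A hA).2.2⟩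
  exact hConv_of_fisherConv_convexified_general 𝒵 h𝒵' (h𝒵c.totallyBounded h𝒵') X hX C hCne
    hCk.totallyBounded hco
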